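/- Let d, N ∈ ℕ, fix contracting linear similarities T_1,...,T_N of ℝ^d with Lip(T_i) < 1/2 for all i, and fix a nonempty compact set C ⊂ ℝ^d. For 𝐭 = (t_1,...,t_N) ∈ (ℝ^d)^N let F_{𝐭,∅} be the unique nonempty compact set with F_{𝐭,∅} = ⋃_{i=1}^N (T_i(F_{𝐭,∅}) + t_i) and let F_{𝐭,C} be the unique nonempty compact set with F_{𝐭,C} = ⋃_{i=1}^N (T_i(F_{𝐭,C}) + t_i) ∪ C. Then for Lebesgue-almost all 𝐭 ∈ (ℝ^d)^N (with respect to the N-fold product of d-dimensional Lebesgue measure), the upper box dimension of F_{𝐭,C} equals max{ub-dim F_{𝐭,∅}, ub-dim C}. -/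

import Mathlib

open Set Filter Topology Metric MeasureTheory

/-- Minimum number of sets of diameter at most `δ` needed to cover `F`. -/
noncomputable def coverN {X : Type*} [MetricSpace X] (F : Set X) (δ : ℝ) : ℕ :=
  sInf {n : ℕ | ∃ U : Fin n → Set X, (∀ i, EMetric.diam (U i) ≤ ENNReal.ofReal δ) ∧ F ⊆ ⋃ i, U i}

/-- Lower box dimension. -/
noncomputable def lbDim {X : Type*} [MetricSpace X] (F : Set X) : ℝ :=
  Filter.liminf (fun δ : ℝ => Real.log (coverN F δ) / (-Real.log δ)) (𝓝[>] 0)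

/-- Upper box dimension. -/
noncomputable def ubDim {X : Type*} [MetricSpace X] (F : Set X) : ℝ :=
  Filter.limsup (fun δ : ℝ => Real.log (coverN F δ) / (-Real.log δ)) (𝓝[>] 0)

/-!
Let `s` be the similarity dimension, `∑ rᵢ ^ s = 1`. A covering recursion over the first map gives
`ubDim F_C ≤ max s (ubDim C)` for every `t`, and `ubDim F_C ≤ d` trivially; since `F_∅` and `C` lie
in the closure of `F_C`, everything reduces to `min s d ≤ ubDim F_∅` for almost every `t`.

For words `u`, `v` with distinct first letters, `t ↦ wordPoint u t - wordPoint v t` moves at speed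
at least `1 - q / (1 - q)` in one of those two letters' translations, and this is positive because
all ratios are at most some `q < 1/2`. Hence the two points are `η`-close with probability
`O(η ^ σ)` for `σ ≤ d`. Weighting words by `∏ rᵢ ^ s`, the expected weight of the `η`-close pairs is
still `O(η ^ σ)` for `σ < s`, by a recursion over the common first letter. By Borel–Cantelli,
for `τ < σ` almost surely at most a proportion `δ ^ τ` of all pairs is `O(δ)`-close along a sequence
of scales `δ → 0`, whereas by Cauchy–Schwarz a cover by `n` sets of diameter `δ` forces a proportion
at least `1 / n`.
-/

open Bornology Module
open scoped NNReal ENNReal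

section CoveringNumber

variable {X : Type*} [MetricSpace X] {F G : Set X} {δ : ℝ}

theorem coverN_le_card {κ : Type*} [Fintype κ] {U : κ → Set X}
    (hU : ∀ k, ediam (U k) ≤ ENNReal.ofReal δ) (hF : F ⊆ ⋃ k, U k) :
    coverN F δ ≤ Fintype.card κ :=
  Nat.sInf_le ⟨U ∘ (Fintype.equivFin κ).symm, fun _ => hU _,
    hF.trans_eq ((Fintype.equivFin κ).symm.surjective.iUnion_comp U).symm⟩

theorem coverN_le_ncard {ρ : ℝ≥0} {A : Set X} (hA : A.Finite) (hFA : IsCover ρ F A) :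
    coverN F (2 * ρ) ≤ A.ncard := by
  have := hA.fintype
  rw [isCover_iff_subset_iUnion_closedBall, biUnion_eq_iUnion] at hFA
  rw [ncard_eq_toFinset_card', toFinset_card]
  refine coverN_le_card (fun a => ediam_le_of_forall_dist_le fun x hx y hy => ?_) hFA
  linarith [dist_triangle_right x y (a : X), mem_closedBall.1 hx, mem_closedBall.1 hy]

theorem exists_cover_coverN (hF : TotallyBounded F) (hδ : 0 < δ) :
    ∃ U : Fin (coverN F δ) → Set X, (∀ k, ediam (U k) ≤ ENNReal.ofReal δ) ∧ F ⊆ ⋃ k, U k := by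
  obtain ⟨A, hA, hFA⟩ := Metric.totallyBounded_iff.1 hF (δ / 2) (half_pos hδ)
  have := hA.fintype
  refine Nat.sInf_mem (s := {n | ∃ U : Fin n → Set X, (∀ k, ediam (U k) ≤ ENNReal.ofReal δ) ∧
    F ⊆ ⋃ k, U k}) ⟨Fintype.card A, fun k => ball ((Fintype.equivFin A).symm k : X) (δ / 2),
    fun k => ediam_le_of_forall_dist_le fun x hx y hy => ?_, ?_⟩
  · linarith [dist_triangle_right x y ((Fintype.equivFin A).symm k : X), mem_ball.1 hx,
      mem_ball.1 hy]
  · rw [(Fintype.equivFin A).symm.surjective.iUnion_comp fun a : A => ball (a : X) (δ / 2),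
      iUnion_coe_set]
    exact hFA

theorem coverN_mono (hG : TotallyBounded G) (h : F ⊆ G) (hδ : 0 < δ) :
    coverN F δ ≤ coverN G δ := by
  obtain ⟨U, hU, hGU⟩ := exists_cover_coverN hG hδ
  simpa using coverN_le_card hU (h.trans hGU)

theorem coverN_anti {δ' : ℝ} (hF : TotallyBounded F) (hδ : 0 < δ) (h : δ ≤ δ') :
    coverN F δ' ≤ coverN F δ := by
  obtain ⟨U, hU, hFU⟩ := exists_cover_coverN hF hδ
  simpa using coverN_le_card (fun k => (hU k).trans (ENNReal.ofReal_le_ofReal h)) hFU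

theorem coverN_pos (hF : TotallyBounded F) (hne : F.Nonempty) (hδ : 0 < δ) : 0 < coverN F δ := by
  obtain ⟨U, -, hFU⟩ := exists_cover_coverN hF hδ
  obtain ⟨x, hx⟩ := hne
  obtain ⟨k, -⟩ := mem_iUnion.1 (hFU hx)
  exact k.pos

theorem coverN_closure : coverN (closure F) δ = coverN F δ := by
  refine congrArg sInf (Set.ext fun n => ⟨fun ⟨U, hU, hFU⟩ => ⟨U, hU, subset_closure.trans hFU⟩,
    fun ⟨U, hU, hFU⟩ => ⟨fun k => closure (U k), fun k => (ediam_closure (U k)).trans_le (hU k),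
      ?_⟩⟩)
  exact (closure_mono hFU).trans_eq (closure_iUnion_of_finite U)

theorem coverN_inhomogeneous_le {ι : Type*} [Fintype ι] {f : ι → X → X} {r : ι → ℝ}
    (hr : ∀ i, 0 < r i) (hf : ∀ i x y, dist (f i x) (f i y) ≤ r i * dist x y) {C : Set X}
    (hC : TotallyBounded C) (hF : TotallyBounded F) (hFC : F ⊆ (⋃ i, f i '' F) ∪ C) (hδ : 0 < δ) :
    coverN F δ ≤ ∑ i, coverN F (δ / r i) + coverN C δ := by
  choose U hU hFU using fun i => exists_cover_coverN hF (div_pos hδ (hr i))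
  obtain ⟨V, hV, hCV⟩ := exists_cover_coverN hC hδ
  let W : (Σ i, Fin (coverN F (δ / r i))) ⊕ Fin (coverN C δ) → Set X :=
    Sum.elim (fun k => f k.1 '' U k.1 k.2) V
  have hW (k) : ediam (W k) ≤ ENNReal.ofReal δ := by
    rcases k with ⟨i, k⟩ | k
    · have hlip : LipschitzWith (r i).toNNReal (f i) :=
        .of_dist_le_mul fun x y => by simpa [(hr i).le] using hf i x y
      calc ediam (f i '' U i k) ≤ (r i).toNNReal * ediam (U i k) := hlip.ediam_image_le _
        _ ≤ ENNReal.ofReal (r i) * ENNReal.ofReal (δ / r i) := mul_le_mul_right (hU i k) _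
        _ = ENNReal.ofReal δ := by
          rw [← ENNReal.ofReal_mul (hr i).le, mul_div_cancel₀ _ (hr i).ne']
    · exact hV k
  have hcover : F ⊆ ⋃ k, W k := by
    rw [iUnion_sum, iUnion_sigma]
    refine hFC.trans (union_subset_union (iUnion_mono fun i => ?_) hCV)
    exact (image_mono (hFU i)).trans_eq image_iUnion
  simpa using coverN_le_card hW hcover

theorem packingNumber_ne_top {ε : ℝ≥0} (hF : TotallyBounded F) (hε : ε ≠ 0) :
    packingNumber ε F ≠ ⊤ := by
  obtain ⟨A, -, hA, hFA⟩ := exists_finite_isCover_of_totallyBounded (half_pos hε.bot_lt).ne' hF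
  have h : packingNumber (2 * (ε / 2)) F ≤ A.encard :=
    (packingNumber_two_mul_le_externalCoveringNumber _ F).trans hFA.externalCoveringNumber_le_encard
  rw [mul_div_cancel₀ ε two_ne_zero] at h
  exact (h.trans_lt hA.encard_lt_top).ne

theorem coverN_mul_le_measure_cthickening [MeasurableSpace X] [OpensMeasurableSpace X]
    (ν : Measure X) {ρ : ℝ} {v : ℝ≥0∞} (hF : TotallyBounded F) (hρ : 0 < ρ)
    (hv : ∀ x ∈ F, v ≤ ν (closedBall x ρ)) :
    coverN F (4 * ρ) * v ≤ ν (cthickening ρ F) := by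
  lift ρ to ℝ≥0 using hρ.le
  have htop : packingNumber (2 * ρ) F ≠ ⊤ :=
    packingNumber_ne_top hF (mul_ne_zero two_ne_zero (NNReal.coe_pos.1 hρ).ne')
  set A := maximalSeparatedSet (2 * ρ) F
  have hAF : A ⊆ F := maximalSeparatedSet_subset
  have hA : A.Finite :=
    encard_ne_top_iff.1 (by rwa [encard_maximalSeparatedSet htop])
  have hdisj : A.PairwiseDisjoint fun x => closedBall x (ρ : ℝ) := fun x hx y hy hxy =>
    closedBall_disjoint_closedBall <| by
      have : (2 * ρ : ℝ≥0) < edist x y := isSeparated_maximalSeparatedSet hx hy hxy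
      rw [edist_nndist, ENNReal.coe_lt_coe, ← NNReal.coe_lt_coe] at this
      simpa [two_mul] using this
  have hcover : coverN F (4 * ρ) ≤ A.ncard := by
    have := coverN_le_ncard hA (isCover_maximalSeparatedSet htop)
    rwa [NNReal.coe_mul, ← mul_assoc, NNReal.coe_two, show (2 * 2 : ℝ) = 4 by norm_num] at this
  calc (coverN F (4 * ρ) : ℝ≥0∞) * v ≤ A.ncard * v := by gcongr
    _ = ∑ _x ∈ hA.toFinset, v := by
      rw [Finset.sum_const, nsmul_eq_mul, ncard_eq_toFinset_card A hA]
    _ ≤ ∑ x ∈ hA.toFinset, ν (closedBall x ρ) :=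
      Finset.sum_le_sum fun x hx => hv x (hAF (hA.mem_toFinset.1 hx))
    _ = ν (⋃ x ∈ hA.toFinset, closedBall x ρ) :=
      (measure_biUnion_finset (by simpa using hdisj) fun _ _ =>
        isClosed_closedBall.measurableSet).symm
    _ ≤ ν (cthickening ρ F) := measure_mono <| iUnion₂_subset fun x hx =>
      closedBall_subset_cthickening (hAF (hA.mem_toFinset.1 hx)) ρ

end CoveringNumber

section BoxDimension

variable {X : Type*} [MetricSpace X] {F G : Set X} {δ σ K : ℝ}

/-- The quotient `log N_δ(F) / (-log δ)` whose upper limit as `δ → 0` is the upper box dimension. -/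
noncomputable def boxRatio (F : Set X) (δ : ℝ) : ℝ :=
  Real.log (coverN F δ) / (-Real.log δ)

theorem eventually_mem_Ioo_one : ∀ᶠ δ : ℝ in 𝓝[>] 0, δ ∈ Ioo 0 1 :=
  Ioo_mem_nhdsGT one_pos

theorem neg_log_pos (hδ : δ ∈ Ioo (0 : ℝ) 1) : 0 < -Real.log δ :=
  neg_pos.2 (Real.log_neg hδ.1 hδ.2)

theorem eventually_boxRatio_nonneg (F : Set X) : ∀ᶠ δ in 𝓝[>] 0, 0 ≤ boxRatio F δ := by
  filter_upwards [eventually_mem_Ioo_one] with δ hδ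
  exact div_nonneg (Real.log_natCast_nonneg _) (neg_log_pos hδ).le

theorem isCoboundedUnder_boxRatio (F : Set X) :
    (𝓝[>] 0).IsCoboundedUnder (· ≤ ·) (boxRatio F) :=
  isCoboundedUnder_le_of_eventually_le _ (eventually_boxRatio_nonneg F)

theorem tendsto_log_div_neg_log_add (K σ : ℝ) :
    Tendsto (fun δ : ℝ => Real.log K / (-Real.log δ) + σ) (𝓝[>] 0) (𝓝 σ) := by
  have h : Tendsto (fun δ : ℝ => -Real.log δ) (𝓝[>] 0) atTop :=
    tendsto_neg_atBot_atTop.comp Real.tendsto_log_nhdsGT_zero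
  simpa using (h.const_div_atTop (Real.log K)).add_const σ

theorem eventually_boxRatio_le (hF : TotallyBounded F) (hne : F.Nonempty)
    (h : ∀ᶠ δ in 𝓝[>] 0, (coverN F δ : ℝ) ≤ K * δ ^ (-σ)) :
    ∀ᶠ δ in 𝓝[>] 0, boxRatio F δ ≤ Real.log K / (-Real.log δ) + σ := by
  filter_upwards [h, eventually_mem_Ioo_one] with δ hle hδ
  have hpos : (0 : ℝ) < coverN F δ := mod_cast coverN_pos hF hne hδ.1
  have hpow : 0 < δ ^ (-σ) := Real.rpow_pos_of_pos hδ.1 _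
  have hK : 0 < K := pos_of_mul_pos_left (hpos.trans_le hle) hpow.le
  have hlog := Real.log_le_log hpos hle
  rw [Real.log_mul hK.ne' hpow.ne', Real.log_rpow hδ.1] at hlog
  rw [boxRatio, div_add' _ _ _ (neg_log_pos hδ).ne', div_le_div_iff_of_pos_right (neg_log_pos hδ)]
  linarith

theorem isBoundedUnder_boxRatio (hF : TotallyBounded F) (hne : F.Nonempty)
    (h : ∀ᶠ δ in 𝓝[>] 0, (coverN F δ : ℝ) ≤ K * δ ^ (-σ)) :
    (𝓝[>] 0).IsBoundedUnder (· ≤ ·) (boxRatio F) :=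
  (tendsto_log_div_neg_log_add K σ).isBoundedUnder_le.mono_le (eventually_boxRatio_le hF hne h)

theorem ubDim_le_of_eventually_coverN_le (hF : TotallyBounded F) (hne : F.Nonempty)
    (h : ∀ᶠ δ in 𝓝[>] 0, (coverN F δ : ℝ) ≤ K * δ ^ (-σ)) : ubDim F ≤ σ :=
  (limsup_le_limsup (eventually_boxRatio_le hF hne h) (isCoboundedUnder_boxRatio F)
    (tendsto_log_div_neg_log_add K σ).isBoundedUnder_le).trans_eq
    (tendsto_log_div_neg_log_add K σ).limsup_eq

theorem eventually_coverN_le_of_ubDim_lt (hbdd : (𝓝[>] 0).IsBoundedUnder (· ≤ ·) (boxRatio F))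
    (h : ubDim F < σ) : ∀ᶠ δ in 𝓝[>] 0, (coverN F δ : ℝ) ≤ δ ^ (-σ) := by
  filter_upwards [eventually_lt_of_limsup_lt h hbdd, eventually_mem_Ioo_one] with δ hlt hδ
  rw [div_lt_iff₀ (neg_log_pos hδ)] at hlt
  refine Real.le_rpow_of_log_le hδ.1 ?_
  linarith

theorem le_ubDim_of_frequently (hbdd : (𝓝[>] 0).IsBoundedUnder (· ≤ ·) (boxRatio F))
    (h : ∃ᶠ δ in 𝓝[>] 0, 1 ≤ coverN F δ * δ ^ σ) : σ ≤ ubDim F := by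
  refine le_limsup_of_frequently_le ((h.and_eventually eventually_mem_Ioo_one).mono ?_) hbdd
  rintro δ ⟨hle, hδ⟩
  have hpow : 0 < δ ^ σ := Real.rpow_pos_of_pos hδ.1 _
  have hpos : (0 : ℝ) < coverN F δ := pos_of_mul_pos_left (one_pos.trans_le hle) hpow.le
  have hlog := Real.log_nonneg hle
  rw [Real.log_mul hpos.ne' hpow.ne', Real.log_rpow hδ.1] at hlog
  rw [le_div_iff₀ (neg_log_pos hδ)]
  linarith

theorem ubDim_nonneg (hbdd : (𝓝[>] 0).IsBoundedUnder (· ≤ ·) (boxRatio F)) : 0 ≤ ubDim F :=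
  le_limsup_of_frequently_le (eventually_boxRatio_nonneg F).frequently hbdd

theorem ubDim_mono (hG : TotallyBounded G) (hbdd : (𝓝[>] 0).IsBoundedUnder (· ≤ ·) (boxRatio G))
    (h : F ⊆ G) : ubDim F ≤ ubDim G := by
  refine limsup_le_limsup ?_ (isCoboundedUnder_boxRatio F) hbdd
  filter_upwards [eventually_mem_Ioo_one] with δ hδ
  have := (neg_log_pos hδ).le
  have := coverN_mono hG h hδ.1
  rcases (coverN F δ).eq_zero_or_pos with h0 | hpos
  · simpa only [h0, Nat.cast_zero, Real.log_zero, zero_div] using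
      div_nonneg (Real.log_natCast_nonneg _) (neg_log_pos hδ).le
  · gcongr

theorem ubDim_closure (F : Set X) : ubDim (closure F) = ubDim F := by
  simp only [ubDim, coverN_closure]

end BoxDimension

section FiniteDimensional

variable {E : Type*} [NormedAddCommGroup E] [NormedSpace ℝ E] [FiniteDimensional ℝ E] {F : Set E}

theorem totallyBounded_of_isBounded (hF : IsBounded F) : TotallyBounded F :=
  have := FiniteDimensional.proper ℝ E
  hF.isCompact_closure.totallyBounded.subset subset_closure

theorem coverN_mul_pow_finrank_le [MeasurableSpace E] [BorelSpace E] (μ : Measure E)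
    [μ.IsAddHaarMeasure] {ρ : ℝ} (hF : IsBounded F) (hρ : 0 < ρ) :
    coverN F (4 * ρ) * (ρ ^ finrank ℝ E * μ.real (ball 0 1)) ≤ μ.real (cthickening ρ F) := by
  have := FiniteDimensional.proper ℝ E
  have h := ENNReal.toReal_mono hF.cthickening.measure_lt_top.ne <|
    coverN_mul_le_measure_cthickening μ (totallyBounded_of_isBounded hF) hρ
      fun x _ => (Measure.addHaar_closedBall μ x hρ.le).ge
  simpa [ENNReal.toReal_ofReal, hρ.le, measureReal_def] using h

theorem exists_coverN_le_rpow_finrank (hF : IsBounded F) :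
    ∃ K : ℝ, ∀ᶠ δ in 𝓝[>] 0, (coverN F δ : ℝ) ≤ K * δ ^ (-(finrank ℝ E : ℝ)) := by
  have := FiniteDimensional.proper ℝ E
  borelize E
  let μ : Measure E := Measure.addHaar
  have hball : 0 < μ.real (ball 0 1) :=
    ENNReal.toReal_pos (measure_ball_pos μ 0 one_pos).ne' measure_ball_lt_top.ne
  refine ⟨4 ^ finrank ℝ E * μ.real (cthickening 1 F) / μ.real (ball 0 1), ?_⟩
  filter_upwards [eventually_mem_Ioo_one] with δ hδ
  have hle : coverN F δ * ((δ / 4) ^ finrank ℝ E * μ.real (ball 0 1)) ≤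
      μ.real (cthickening 1 F) := by
    refine le_trans ?_ <| measureReal_mono (cthickening_mono (by linarith [hδ.2] : δ / 4 ≤ 1) F)
      hF.cthickening.measure_lt_top.ne
    simpa only [mul_div_cancel₀ δ four_ne_zero] using
      coverN_mul_pow_finrank_le μ hF (div_pos hδ.1 four_pos)
  have hpow : 0 < δ ^ finrank ℝ E := pow_pos hδ.1 _
  rw [Real.rpow_neg hδ.1.le, Real.rpow_natCast, ← div_eq_mul_inv, div_div,
    le_div_iff₀ (mul_pos hball hpow)]
  rw [div_pow, div_mul_eq_mul_div, mul_div_assoc', div_le_iff₀' (by positivity)] at hle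
  linarith

theorem isBoundedUnder_boxRatio_of_isBounded (hF : IsBounded F) (hne : F.Nonempty) :
    (𝓝[>] 0).IsBoundedUnder (· ≤ ·) (boxRatio F) :=
  have ⟨_, h⟩ := exists_coverN_le_rpow_finrank hF
  isBoundedUnder_boxRatio (totallyBounded_of_isBounded hF) hne h

theorem ubDim_le_finrank (hF : IsBounded F) (hne : F.Nonempty) : ubDim F ≤ finrank ℝ E :=
  have ⟨_, h⟩ := exists_coverN_le_rpow_finrank hF
  ubDim_le_of_eventually_coverN_le (totallyBounded_of_isBounded hF) hne h

end FiniteDimensional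

section ScaleRecursion

theorem exists_mem_Ioo_forall_le {ι : Type*} [Finite ι] {r : ι → ℝ} {c : ℝ} (hc : 0 < c)
    (hr : ∀ i, r i < c) : ∃ q ∈ Ioo 0 c, ∀ i, r i ≤ q := by
  obtain ⟨q, hq0, hq⟩ := exists_between hc
  cases isEmpty_or_nonempty ι
  · exact ⟨q, ⟨hq0, hq⟩, isEmptyElim⟩
  · obtain ⟨i, hi⟩ := Finite.exists_max r
    exact ⟨max q (r i), ⟨lt_max_of_lt_left hq0, max_lt hq (hr i)⟩,
      fun j => (hi j).trans (le_max_right _ _)⟩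

variable {ι : Type*} [Fintype ι]

theorem exists_rpow_bound_of_scale_recursion {φ : ℕ → ℝ → ℝ} {S : Set ℝ} {a r : ι → ℝ}
    {q ε τ A B : ℝ} (hr : ∀ i, 0 < r i) (hrq : ∀ i, r i ≤ q) (ha : ∀ i, 0 ≤ a i) (hε : 0 < ε)
    (hq : 0 < q) (hsum : ∑ i, a i * r i ^ (-τ) < 1)
    (hS : ∀ δ ∈ Ioo 0 ε, ∀ i, δ / r i ∈ S)
    (hlarge : ∀ m, ∀ δ ∈ S, ε ≤ δ → φ m δ ≤ A * δ ^ τ)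
    (hrec : ∀ m, ∀ δ ∈ Ioo 0 ε, φ (m + 1) δ ≤ ∑ i, a i * φ m (δ / r i) + B * δ ^ τ) :
    ∃ M, ∀ m, ∀ δ ∈ S, ε * q ^ m ≤ δ → φ m δ ≤ M * δ ^ τ := by
  set ρ := ∑ i, a i * r i ^ (-τ)
  have hρ : 0 < 1 - ρ := sub_pos.2 hsum
  set M := max A (B / (1 - ρ))
  have hM : M * ρ + B ≤ M := by
    have := (div_le_iff₀ hρ).1 (le_max_right A (B / (1 - ρ)))
    linarith
  refine ⟨M, fun m => ?_⟩
  have large (m) (δ) (hδS : δ ∈ S) (hεδ : ε ≤ δ) : φ m δ ≤ M * δ ^ τ :=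
    (hlarge m δ hδS hεδ).trans <| mul_le_mul_of_nonneg_right (le_max_left _ _) <|
      Real.rpow_nonneg (hε.le.trans hεδ) _
  induction m with
  | zero => exact fun δ hδS hδ => large 0 δ hδS (by simpa using hδ)
  | succ m ih =>
    intro δ hδS hδ
    rcases le_or_gt ε δ with hεδ | hδε
    · exact large (m + 1) δ hδS hεδ
    have hδ0 : 0 < δ := (by positivity : 0 < ε * q ^ (m + 1)).trans_le hδ
    have hstep (i) : φ m (δ / r i) ≤ M * (r i ^ (-τ) * δ ^ τ) := by
      refine (ih _ (hS δ ⟨hδ0, hδε⟩ i) ?_).trans_eq ?_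
      · rw [le_div_iff₀ (hr i)]
        calc ε * q ^ m * r i ≤ ε * q ^ m * q := by gcongr; exact hrq i
          _ = ε * q ^ (m + 1) := by ring
          _ ≤ δ := hδ
      · rw [Real.div_rpow hδ0.le (hr i).le, Real.rpow_neg (hr i).le, div_eq_inv_mul]
    calc φ (m + 1) δ ≤ ∑ i, a i * φ m (δ / r i) + B * δ ^ τ := hrec m δ ⟨hδ0, hδε⟩
      _ ≤ ∑ i, a i * (M * (r i ^ (-τ) * δ ^ τ)) + B * δ ^ τ := by
        gcongr with i
        exacts [ha i, hstep i]
      _ = (M * ρ + B) * δ ^ τ := by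
        rw [add_mul, Finset.mul_sum, Finset.sum_mul]
        congr 1
        exact Finset.sum_congr rfl fun i _ => by ring
      _ ≤ M * δ ^ τ := mul_le_mul_of_nonneg_right hM (Real.rpow_nonneg hδ0.le _)

theorem exists_sum_rpow_eq_one [Nonempty ι] {r : ι → ℝ} (hr : ∀ i, 0 < r i) (hr1 : ∀ i, r i < 1) :
    ∃ s : ℝ, 0 ≤ s ∧ ∑ i, r i ^ s = 1 := by
  have hcont : Continuous fun s : ℝ => ∑ i, r i ^ s :=
    continuous_finsetSum _ fun i _ => Real.continuous_const_rpow (hr i).ne'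
  have hzero : Tendsto (fun s : ℝ => ∑ i, r i ^ s) atTop (𝓝 0) := by
    simpa only [Finset.sum_const_zero] using tendsto_finsetSum Finset.univ fun i _ =>
      tendsto_rpow_atTop_of_base_lt_one (r i) (by linarith [hr i]) (hr1 i)
  obtain ⟨b, hb, hb0⟩ := ((hzero.eventually_le_const one_pos).and (eventually_ge_atTop 0)).exists
  have hone : (1 : ℝ) ≤ ∑ i, r i ^ (0 : ℝ) := by
    simp [Nat.one_le_iff_ne_zero]
  obtain ⟨s, hs, heq⟩ := intermediate_value_Icc' hb0 hcont.continuousOn ⟨hb, hone⟩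
  exact ⟨s, hs.1, heq⟩

theorem sum_rpow_lt_one {r : ι → ℝ} {s σ : ℝ} (hr : ∀ i, 0 < r i) (hr1 : ∀ i, r i < 1)
    (hs : ∑ i, r i ^ s ≤ 1) (h : s < σ) : ∑ i, r i ^ σ < 1 := by
  cases isEmpty_or_nonempty ι
  · simp
  · exact (Finset.sum_lt_sum_of_nonempty Finset.univ_nonempty fun i _ =>
      Real.rpow_lt_rpow_of_exponent_gt (hr i) (hr1 i) h).trans_le hs

end ScaleRecursion

section InhomogeneousAttractor

variable {ι : Type*} [Fintype ι] {X : Type*} [MetricSpace X] {f : ι → X → X} {r : ι → ℝ}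
  {F C : Set X} {s σ : ℝ}

theorem exists_coverN_inhomogeneous_le_rpow (hr : ∀ i, 0 < r i) (hr1 : ∀ i, r i < 1)
    (hf : ∀ i x y, dist (f i x) (f i y) ≤ r i * dist x y) (hF : TotallyBounded F)
    (hFC : F = (⋃ i, f i '' F) ∪ C) (hσ0 : 0 ≤ σ) (hσ : ∑ i, r i ^ σ < 1)
    (hC : ∀ᶠ δ in 𝓝[>] 0, (coverN C δ : ℝ) ≤ δ ^ (-σ)) :
    ∃ K : ℝ, ∀ᶠ δ in 𝓝[>] 0, (coverN F δ : ℝ) ≤ K * δ ^ (-σ) := by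
  obtain ⟨q, ⟨hq0, hq1⟩, hrq⟩ := exists_mem_Ioo_forall_le one_pos hr1
  obtain ⟨ε, hε : 0 < ε, hεC⟩ := mem_nhdsGT_iff_exists_Ioo_subset.1 hC
  obtain ⟨b, hb⟩ := Finite.exists_le fun i => ε / r i
  have hCbdd : TotallyBounded C := hF.subset (hFC ▸ subset_union_right)
  have hlarge : ∀ δ ∈ Iic (max b ε), ε ≤ δ →
      (coverN F δ : ℝ) ≤ coverN F ε * max b ε ^ σ * δ ^ (-σ) := fun δ hδb hεδ => by
    have hδ : 0 < δ := hε.trans_le hεδ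
    rw [Real.rpow_neg hδ.le, ← div_eq_mul_inv, le_div_iff₀ (Real.rpow_pos_of_pos hδ _)]
    have := coverN_anti hF hε hεδ
    gcongr
    exact hδb
  have hrec : ∀ δ ∈ Ioo 0 ε,
      (coverN F δ : ℝ) ≤ ∑ i, 1 * (coverN F (δ / r i) : ℝ) + 1 * δ ^ (-σ) := fun δ hδ => by
    simp only [one_mul]
    calc (coverN F δ : ℝ) ≤ ∑ i, (coverN F (δ / r i) : ℝ) + coverN C δ := by
          exact_mod_cast coverN_inhomogeneous_le hr hf hCbdd hF hFC.subset hδ.1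
      _ ≤ ∑ i, (coverN F (δ / r i) : ℝ) + δ ^ (-σ) := by
          gcongr
          exact hεC hδ
  obtain ⟨K, hK⟩ := exists_rpow_bound_of_scale_recursion hr hrq (fun _ => zero_le_one) hε hq0
    (by simpa using hσ)
    (fun δ hδ i => le_max_of_le_left <| (div_le_div_of_nonneg_right hδ.2.le (hr i).le).trans (hb i))
    (fun _ => hlarge) (fun _ => hrec)
  refine ⟨K, ?_⟩
  filter_upwards [Ioo_mem_nhdsGT hε] with δ hδ
  obtain ⟨m, hm⟩ := exists_pow_lt_of_lt_one (div_pos hδ.1 hε) hq1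
  exact hK m δ (le_max_of_le_right hδ.2.le) ((lt_div_iff₀' hε).1 hm).le

theorem ubDim_inhomogeneous_le (hr : ∀ i, 0 < r i) (hr1 : ∀ i, r i < 1)
    (hf : ∀ i x y, dist (f i x) (f i y) ≤ r i * dist x y) (hF : TotallyBounded F)
    (hFC : F = (⋃ i, f i '' F) ∪ C) (hCne : C.Nonempty)
    (hCbdd : (𝓝[>] 0).IsBoundedUnder (· ≤ ·) (boxRatio C)) (hs : ∑ i, r i ^ s ≤ 1) :
    ubDim F ≤ max s (ubDim C) := by
  have hFne : F.Nonempty := hCne.mono (hFC ▸ subset_union_right)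
  refine le_of_forall_gt_imp_ge_of_dense fun σ hσ => ?_
  obtain ⟨hsσ, hCσ⟩ := max_lt_iff.1 hσ
  obtain ⟨K, hK⟩ := exists_coverN_inhomogeneous_le_rpow hr hr1 hf hF hFC
    ((ubDim_nonneg hCbdd).trans hCσ.le) (sum_rpow_lt_one hr hr1 hs hsσ)
    (eventually_coverN_le_of_ubDim_lt hCbdd hCσ)
  exact ubDim_le_of_eventually_coverN_le hF hFne hK

/-- Each point of `F` is `f_u(z)` for arbitrarily long words `u`, and `f_u` moves it close to
`f_u(y) ∈ G` for any `y ∈ G`. -/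
theorem subset_closure_of_mapsTo {κ Y : Type*} [PseudoMetricSpace Y] {g : κ → Y → Y} {q : ℝ}
    {F G : Set Y} (hq0 : 0 ≤ q) (hq1 : q < 1) (hg : ∀ i x y, dist (g i x) (g i y) ≤ q * dist x y)
    (hFbdd : IsBounded F) (hF : F ⊆ ⋃ i, g i '' F) (hG : ∀ i, MapsTo (g i) G G)
    (hGne : G.Nonempty) : F ⊆ closure G := by
  obtain ⟨y₀, hy₀⟩ := hGne
  obtain ⟨D, hD⟩ := (isBounded_iff_subset_closedBall y₀).1 hFbdd
  have approx (m : ℕ) : ∀ x ∈ F, ∃ y ∈ G, dist x y ≤ q ^ m * D := by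
    induction m with
    | zero => exact fun x hx => ⟨y₀, hy₀, by simpa using hD hx⟩
    | succ m ih =>
      intro x hx
      obtain ⟨i, z, hz, rfl⟩ := mem_iUnion.1 (hF hx)
      obtain ⟨y, hy, hzy⟩ := ih z hz
      refine ⟨g i y, hG i hy, (hg i z y).trans ?_⟩
      rw [pow_succ', mul_assoc]
      gcongr
  intro x hx
  refine Metric.mem_closure_iff.2 fun ε hε => ?_
  have hlim : Tendsto (fun m : ℕ => q ^ m * D) atTop (𝓝 0) := by
    simpa using (tendsto_pow_atTop_nhds_zero_of_lt_one hq0 hq1).mul_const D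
  obtain ⟨m, hm⟩ := (hlim.eventually_lt_const hε).exists
  obtain ⟨y, hy, hxy⟩ := approx m x hx
  exact ⟨y, hy, hxy.trans_lt hm⟩

end InhomogeneousAttractor

section WordPoint

variable {ι E : Type*} [NormedAddCommGroup E] {T : ι → E → E} {r : ι → ℝ} {q : ℝ}

/-- The point `f_{u 0} (f_{u 1} (⋯ y))` obtained by applying to `y` the maps `f_i = T_i + t_i`
along the word `u`. -/
def wordPoint (T : ι → E → E) (y : E) : {m : ℕ} → (Fin m → ι) → (ι → E) → E
  | 0, _, _ => y
  | _ + 1, u, t => T (u 0) (wordPoint T y (Fin.tail u) t) + t (u 0)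

theorem wordPoint_mem {F : Set E} {t : ι → E} (hF : ∀ i, MapsTo (fun x => T i x + t i) F F) {y : E}
    (hy : y ∈ F) {m : ℕ} (u : Fin m → ι) : wordPoint T y u t ∈ F := by
  induction m with
  | zero => exact hy
  | succ m ih => exact hF (u 0) (ih (Fin.tail u))

theorem continuous_wordPoint (hT : ∀ i, Continuous (T i)) (y : E) {m : ℕ} (u : Fin m → ι) :
    Continuous (wordPoint T y u) := by
  induction m with
  | zero => exact continuous_const
  | succ m ih => exact ((hT (u 0)).comp (ih (Fin.tail u))).add (continuous_apply (u 0))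

theorem dist_wordPoint_wordPoint_le (hq : 0 ≤ q)
    (hT : ∀ i x y, dist (T i x) (T i y) ≤ q * dist x y) (x y : E) {m : ℕ} (u : Fin m → ι)
    (t : ι → E) : dist (wordPoint T x u t) (wordPoint T y u t) ≤ q ^ m * dist x y := by
  induction m with
  | zero => simp [wordPoint]
  | succ m ih =>
    rw [wordPoint, wordPoint, dist_add_right, pow_succ', mul_assoc]
    exact (hT _ _ _).trans (mul_le_mul_of_nonneg_left (ih _) hq)

theorem dist_wordPoint_cons (hT : ∀ i x y, dist (T i x) (T i y) = r i * dist x y) (y : E) {m : ℕ}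
    (i : ι) (u v : Fin m → ι) (t : ι → E) :
    dist (wordPoint T y (Fin.cons i u : Fin (m + 1) → ι) t)
        (wordPoint T y (Fin.cons i v : Fin (m + 1) → ι) t) =
      r i * dist (wordPoint T y u t) (wordPoint T y v t) := by
  simp only [wordPoint, Fin.cons_zero, Fin.tail_cons, dist_add_right, hT]

variable [DecidableEq ι]

theorem exists_dist_wordPoint_update_le [Fintype ι] (hr : ∀ i, 0 ≤ r i) (hrq : ∀ i, r i ≤ q)
    (hq : q < 1) (hT : ∀ i x y, dist (T i x) (T i y) ≤ r i * dist x y) (y : E) {m : ℕ}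
    (u : Fin m → ι) :
    ∃ L : ι → ℝ, (∀ k, 0 ≤ L k) ∧ ∑ k, L k ≤ (1 - q)⁻¹ ∧ ∀ k t a b,
      dist (wordPoint T y u (Function.update t k a)) (wordPoint T y u (Function.update t k b)) ≤
        L k * dist a b := by
  have hq' : 0 < 1 - q := sub_pos.2 hq
  induction m with
  | zero =>
    exact ⟨0, fun _ => le_rfl, by simpa using hq.le, fun k t a b => by simp [wordPoint]⟩
  | succ m ih =>
    obtain ⟨L, hL0, hL, hlip⟩ := ih (Fin.tail u)
    refine ⟨fun k => r (u 0) * L k + if k = u 0 then 1 else 0, fun k => ?_, ?_,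
      fun k t a b => ?_⟩
    · exact add_nonneg (mul_nonneg (hr _) (hL0 k)) (ite_nonneg zero_le_one le_rfl)
    · rw [Finset.sum_add_distrib, ← Finset.mul_sum, Finset.sum_ite_eq' _ (u 0),
        if_pos (Finset.mem_univ _)]
      calc r (u 0) * ∑ k, L k + 1 ≤ q * (1 - q)⁻¹ + 1 :=
            add_le_add_left (mul_le_mul (hrq _) hL (Finset.sum_nonneg fun k _ => hL0 k)
              ((hr (u 0)).trans (hrq _))) 1
        _ = (1 - q)⁻¹ := by field_simp; ring
    · have htail := (hT (u 0) _ _).trans (mul_le_mul_of_nonneg_left (hlip k t a b) (hr (u 0)))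
      have hhead : dist (Function.update t k a (u 0)) (Function.update t k b (u 0)) =
          (if k = u 0 then 1 else 0) * dist a b := by
        by_cases h : k = u 0
        · simp [h]
        · simp [h, Function.update_of_ne (Ne.symm h)]
      refine (dist_add_add_le _ _ _ _).trans ?_
      linarith

theorem exists_transversal_coordinate [Finite ι] (hr : ∀ i, 0 ≤ r i) (hrq : ∀ i, r i ≤ q)
    (hq : q < 1) (hT : ∀ i x y, dist (T i x) (T i y) ≤ r i * dist x y) (y : E) {m : ℕ}
    {u v : Fin (m + 1) → ι} (huv : u 0 ≠ v 0) :
    ∃ k, ∀ t a b, (1 - q / (1 - q)) * dist a b ≤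
      dist (wordPoint T y u (Function.update t k a) - wordPoint T y v (Function.update t k a))
        (wordPoint T y u (Function.update t k b) - wordPoint T y v (Function.update t k b)) := by
  have := Fintype.ofFinite ι
  obtain ⟨L, hL0, hL, hlipL⟩ := exists_dist_wordPoint_update_le hr hrq hq hT y (Fin.tail u)
  obtain ⟨M, hM0, hM, hlipM⟩ := exists_dist_wordPoint_update_le hr hrq hq hT y (Fin.tail v)
  have pair_le {A : ι → ℝ} (hA : ∀ k, 0 ≤ A k) (hsum : ∑ k, A k ≤ (1 - q)⁻¹) (i) :
      r i * (A (u 0) + A (v 0)) ≤ q / (1 - q) :=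
    mul_le_mul (hrq i) ((Finset.add_le_sum (fun k _ => hA k) (Finset.mem_univ _)
      (Finset.mem_univ _) huv).trans hsum) (add_nonneg (hA _) (hA _)) ((hr i).trans (hrq i))
  obtain ⟨k, hk, hLM⟩ : ∃ k, (k = u 0 ∨ k = v 0) ∧
      r (u 0) * L k + r (v 0) * M k ≤ q / (1 - q) := by
    by_contra! h
    linarith [h _ (.inl rfl), h _ (.inr rfl), pair_le hL0 hL (u 0), pair_le hM0 hM (v 0)]
  refine ⟨k, fun t a b => ?_⟩
  set ta := Function.update t k a
  set tb := Function.update t k b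
  set P := fun t => T (u 0) (wordPoint T y (Fin.tail u) t)
  set Q := fun t => T (v 0) (wordPoint T y (Fin.tail v) t)
  have hP := (hT (u 0) _ _).trans (mul_le_mul_of_nonneg_left (hlipL k t a b) (hr (u 0)))
  have hQ := (hT (v 0) _ _).trans (mul_le_mul_of_nonneg_left (hlipM k t a b) (hr (v 0)))
  have htrans : dist (ta (u 0) - ta (v 0)) (tb (u 0) - tb (v 0)) = dist a b := by
    rcases hk with rfl | rfl
    · simp only [ta, tb, Function.update_self, Function.update_of_ne huv.symm, dist_sub_right]
    · simp only [ta, tb, Function.update_self, Function.update_of_ne huv, dist_sub_left]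
  have hsplit (t) : wordPoint T y u t - wordPoint T y v t - (P t - Q t) = t (u 0) - t (v 0) := by
    simp only [wordPoint, P, Q]
    abel
  have htri := dist_sub_sub_le (wordPoint T y u ta - wordPoint T y v ta) (P ta - Q ta)
    (wordPoint T y u tb - wordPoint T y v tb) (P tb - Q tb)
  rw [hsplit, hsplit, htrans] at htri
  linarith [dist_sub_sub_le (P ta) (Q ta) (P tb) (Q tb),
    mul_le_mul_of_nonneg_right hLM (dist_nonneg (x := a) (y := b))]

end WordPoint

section ProductMeasure

theorem measure_pi_le_of_slice_le {ι : Type*} [Fintype ι] [DecidableEq ι] {X : ι → Type*}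
    [∀ i, MeasurableSpace (X i)] (ν : ∀ i, Measure (X i)) [∀ i, SigmaFinite (ν i)]
    {S : Set (∀ i, X i)} (hS : MeasurableSet S) (k : ι) {B : ℝ≥0∞}
    (hB : ∀ t, ν k (Function.update t k ⁻¹' S) ≤ B) :
    Measure.pi ν S ≤ B * ∏ j ∈ Finset.univ.erase k, ν j univ := by
  rcases isEmpty_or_nonempty (∀ i, X i) with hX | ⟨⟨t₀⟩⟩
  · simp [Set.eq_empty_of_isEmpty S]
  have hslice (t) : ∫⁻ a, S.indicator 1 (Function.update t k a) ∂ν k ≤ B :=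
    (lintegral_indicator_one (hS.preimage (measurable_update t))).trans_le (hB t)
  calc Measure.pi ν S = ∫⁻ t, S.indicator 1 t ∂Measure.pi ν := (lintegral_indicator_one hS).symm
    _ = (∫⋯∫⁻_Finset.univ.erase k, (fun t => ∫⁻ a, S.indicator 1 (Function.update t k a) ∂ν k) ∂ν)
        t₀ := by
      rw [lintegral_eq_lmarginal_univ t₀,
        lmarginal_erase' _ (measurable_one.indicator hS) (Finset.mem_univ k)]
    _ ≤ (∫⋯∫⁻_Finset.univ.erase k, (fun _ => B) ∂ν) t₀ := lmarginal_mono hslice t₀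
    _ = B * ∏ j ∈ Finset.univ.erase k, ν j univ := by
      rw [lmarginal, lintegral_const, Measure.pi_univ,
        Finset.prod_coe_sort (Finset.univ.erase k) fun j => ν j univ]

theorem measureReal_pi_preimage_closedBall_le {ι X Y : Type*} [Fintype ι] [DecidableEq ι]
    [PseudoMetricSpace X] [MeasurableSpace X] [PseudoMetricSpace Y] [MeasurableSpace Y]
    [OpensMeasurableSpace Y] (ν : Measure X) [IsFiniteMeasure ν] {A c σ η : ℝ} (hA : 0 ≤ A)
    (hν : ∀ x, ∀ ρ > 0, ν.real (closedBall x ρ) ≤ A * ρ ^ σ) (hc : 0 < c) {g : (ι → X) → Y}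
    (hg : Measurable g) {k : ι}
    (hk : ∀ t a b, c * dist a b ≤ dist (g (Function.update t k a)) (g (Function.update t k b)))
    (z : Y) (hη : 0 < η) :
    (Measure.pi fun _ => ν).real (g ⁻¹' closedBall z η) ≤
      A * (2 / c) ^ σ * ν.real univ ^ (Fintype.card ι - 1) * η ^ σ := by
  have hslice (t : ι → X) : ν (Function.update t k ⁻¹' (g ⁻¹' closedBall z η)) ≤
      ENNReal.ofReal (A * (2 / c * η) ^ σ) := by
    rcases (Function.update t k ⁻¹' (g ⁻¹' closedBall z η)).eq_empty_or_nonempty with h | ⟨b, hb⟩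
    · simp [h]
    have hball : Function.update t k ⁻¹' (g ⁻¹' closedBall z η) ⊆ closedBall b (2 / c * η) :=
      fun a ha => by
        have := (hk t a b).trans ((dist_triangle_right _ _ z).trans (add_le_add ha hb))
        rw [mem_closedBall, div_mul_eq_mul_div, le_div_iff₀ hc]
        linarith
    rw [← ofReal_measureReal]
    exact ENNReal.ofReal_le_ofReal ((measureReal_mono hball).trans (hν b _ (by positivity)))
  have h := ENNReal.toReal_mono (ENNReal.mul_ne_top ENNReal.ofReal_ne_top <|
    ENNReal.prod_ne_top fun _ _ => measure_ne_top ν univ)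
    (measure_pi_le_of_slice_le (fun _ => ν) (hg isClosed_closedBall.measurableSet) k hslice)
  rw [ENNReal.toReal_mul, ENNReal.toReal_ofReal (by positivity), Finset.prod_const,
    Finset.card_erase_of_mem (Finset.mem_univ k), ENNReal.toReal_pow,
    Real.mul_rpow (by positivity) hη.le] at h
  refine h.trans_eq ?_
  rw [measureReal_def, Finset.card_univ]
  ring

end ProductMeasure

section Energy

variable {κ X : Type*} [Fintype κ] {w : κ → ℝ}

/-- The energy `∑ w u w v J(u, v)` of the weights `w` with respect to the kernel `J`. -/
def energy (w : κ → ℝ) (J : κ → κ → ℝ) : ℝ :=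
  ∑ u, ∑ v, w u * w v * J u v

theorem energy_mono {J J' : κ → κ → ℝ} (hw : ∀ u, 0 ≤ w u) (h : ∀ u v, J u v ≤ J' u v) :
    energy w J ≤ energy w J' :=
  Finset.sum_le_sum fun u _ => Finset.sum_le_sum fun v _ =>
    mul_le_mul_of_nonneg_left (h u v) (mul_nonneg (hw u) (hw v))

theorem energy_const (w : κ → ℝ) (c : ℝ) : energy w (fun _ _ => c) = (∑ u, w u) ^ 2 * c := by
  simp_rw [energy, ← Finset.sum_mul, ← Finset.sum_mul_sum, sq]

theorem sq_sum_le_card_mul_energy {α : Type*} [Fintype α] [DecidableEq α] (w : κ → ℝ)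
    (c : κ → α) :
    (∑ u, w u) ^ 2 ≤ Fintype.card α * energy w fun u v => if c u = c v then 1 else 0 := by
  calc (∑ u, w u) ^ 2 = (∑ k, ∑ u, if c u = k then w u else 0) ^ 2 := by
        rw [Finset.sum_comm]
        simp only [Finset.sum_ite_eq, Finset.mem_univ, if_true]
    _ ≤ Fintype.card α * ∑ k, (∑ u, if c u = k then w u else 0) ^ 2 := sq_sum_le_card_mul_sum_sq
    _ = Fintype.card α * energy w fun u v => if c u = c v then 1 else 0 := by
        simp_rw [sq, Finset.sum_mul_sum, energy]
        rw [Finset.sum_comm]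
        congr! 2 with u
        rw [Finset.sum_comm]
        congr! 1 with v
        simp only [ite_mul, zero_mul, Finset.sum_ite_eq, Finset.mem_univ, if_true, mul_ite, mul_one,
          mul_zero]

/-- The correlation sum of the points `x u` with weights `w u` at scale `η`: the total weight
`∑ w u w v` of the pairs `(u, v)` with `dist (x u) (x v) ≤ η`. -/
noncomputable def correlationSum [PseudoMetricSpace X] (w : κ → ℝ) (x : κ → X) (η : ℝ) : ℝ :=
  energy w fun u v => if dist (x u) (x v) ≤ η then 1 else 0

theorem correlationSum_nonneg [PseudoMetricSpace X] (hw : ∀ u, 0 ≤ w u) (x : κ → X) (η : ℝ) :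
    0 ≤ correlationSum w x η :=
  Finset.sum_nonneg fun u _ => Finset.sum_nonneg fun v _ =>
    mul_nonneg (mul_nonneg (hw u) (hw v)) (ite_nonneg zero_le_one le_rfl)

theorem one_le_coverN_mul_correlationSum [MetricSpace X] {F : Set X} {x y : κ → X} {δ η ρ : ℝ}
    (hw : ∀ u, 0 ≤ w u) (hw1 : ∑ u, w u = 1) (hF : TotallyBounded F) (hδ : 0 < δ)
    (hy : ∀ u, y u ∈ F) (hxy : ∀ u, dist (x u) (y u) ≤ ρ) (hη : δ + 2 * ρ ≤ η) :
    1 ≤ coverN F δ * correlationSum w x η := by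
  obtain ⟨U, hU, hFU⟩ := exists_cover_coverN hF hδ
  choose c hc using fun u => mem_iUnion.1 (hFU (hy u))
  have hclose (u v) (h : c u = c v) : dist (x u) (x v) ≤ η := by
    have hyδ : dist (y u) (y v) ≤ δ := (edist_le_ofReal hδ.le).1 <|
      (edist_le_ediam_of_mem (hc u) (h ▸ hc v)).trans (hU (c u))
    linarith [dist_triangle4_right (x u) (x v) (y u) (y v), hxy u, hxy v]
  calc (1 : ℝ) = (∑ u, w u) ^ 2 := by rw [hw1, one_pow]
    _ ≤ coverN F δ * energy w fun u v => if c u = c v then 1 else 0 := by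
      simpa only [Fintype.card_fin] using sq_sum_le_card_mul_energy w c
    _ ≤ coverN F δ * correlationSum w x η := by
      refine mul_le_mul_of_nonneg_left (energy_mono hw fun u v => ?_) (Nat.cast_nonneg _)
      by_cases h : c u = c v
      · rw [if_pos h, if_pos (hclose u v h)]
      · exact (if_neg h).trans_le (ite_nonneg zero_le_one le_rfl)

variable [PseudoMetricSpace X] {Ω : Type*} [MeasurableSpace Ω] (P : Measure Ω) [IsFiniteMeasure P]
  {x : κ → Ω → X} {η : ℝ}

theorem integrable_correlationSum (hx : ∀ u v, MeasurableSet {t | dist (x u t) (x v t) ≤ η})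
    (w : κ → ℝ) : Integrable (fun t => correlationSum w (x · t) η) P :=
  integrable_finsetSum _ fun u _ => integrable_finsetSum _ fun v _ =>
    ((integrable_const 1).indicator (hx u v)).const_mul _

theorem integral_correlationSum (hx : ∀ u v, MeasurableSet {t | dist (x u t) (x v t) ≤ η})
    (w : κ → ℝ) :
    ∫ t, correlationSum w (x · t) η ∂P =
      energy w fun u v => P.real {t | dist (x u t) (x v t) ≤ η} := by
  have hint (u v) : Integrable (fun t => w u * w v * if dist (x u t) (x v t) ≤ η then 1 else 0) P :=
    ((integrable_const 1).indicator (hx u v)).const_mul _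
  simp only [correlationSum, energy]
  rw [integral_finsetSum _ fun u _ => integrable_finsetSum _ fun v _ => hint u v]
  refine Finset.sum_congr rfl fun u _ => ?_
  rw [integral_finsetSum _ fun v _ => hint u v]
  refine Finset.sum_congr rfl fun v _ => ?_
  rw [integral_const_mul]
  exact congrArg _ (integral_indicator_one (hx u v))

end Energy

section WordWeight

variable {ι : Type*} {p : ι → ℝ}

/-- The Bernoulli weight of a word: the product of the weights of its letters. -/
def wordWeight (p : ι → ℝ) {m : ℕ} (u : Fin m → ι) : ℝ :=
  ∏ k, p (u k)

theorem wordWeight_nonneg (hp : ∀ i, 0 ≤ p i) {m : ℕ} (u : Fin m → ι) : 0 ≤ wordWeight p u :=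
  Finset.prod_nonneg fun k _ => hp (u k)

theorem wordWeight_cons (p : ι → ℝ) (i : ι) {m : ℕ} (u : Fin m → ι) :
    wordWeight p (Fin.cons i u : Fin (m + 1) → ι) = p i * wordWeight p u := by
  simp only [wordWeight, Fin.prod_univ_succ, Fin.cons_zero, Fin.cons_succ]

variable [Fintype ι]

theorem sum_wordWeight (hp : ∑ i, p i = 1) (m : ℕ) : ∑ u : Fin m → ι, wordWeight p u = 1 := by
  classical
  simp only [wordWeight, ← Fintype.prod_sum, hp, Finset.prod_const_one]

theorem sum_word_succ {m : ℕ} (f : (Fin (m + 1) → ι) → ℝ) :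
    ∑ u, f u = ∑ i, ∑ u : Fin m → ι, f (Fin.cons i u) := by
  classical
  rw [← (Fin.consEquiv fun _ => ι).sum_comp, Fintype.sum_prod_type]
  rfl

theorem energy_wordWeight_succ (p : ι → ℝ) {m : ℕ}
    (J : (Fin (m + 1) → ι) → (Fin (m + 1) → ι) → ℝ) :
    energy (wordWeight p) J = ∑ i, ∑ j, p i * p j *
      energy (wordWeight p) fun u v : Fin m → ι => J (Fin.cons i u) (Fin.cons j v) := by
  simp only [energy, sum_word_succ, wordWeight_cons, Finset.mul_sum]
  refine Finset.sum_congr rfl fun i _ => Finset.sum_comm.trans <| Finset.sum_congr rfl fun j _ =>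
    Finset.sum_congr rfl fun u _ => Finset.sum_congr rfl fun v _ => by ring

theorem energy_wordWeight_succ_le (hp : ∀ i, 0 ≤ p i) (hp1 : ∑ i, p i = 1) {m : ℕ} {c : ℝ}
    (hc : 0 ≤ c) {J : (Fin (m + 1) → ι) → (Fin (m + 1) → ι) → ℝ}
    (hJ : ∀ u v, u 0 ≠ v 0 → J u v ≤ c) :
    energy (wordWeight p) J ≤ ∑ i, p i ^ 2 *
      energy (wordWeight p) (fun u v : Fin m → ι => J (Fin.cons i u) (Fin.cons i v)) + c := by
  classical
  set e : ι → ι → ℝ := fun i j =>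
    energy (wordWeight p) fun u v : Fin m → ι => J (Fin.cons i u) (Fin.cons j v)
  have he (i j) : e i j ≤ (if i = j then e i i else 0) + c := by
    split_ifs with h
    · subst h
      exact le_add_of_nonneg_right hc
    · calc e i j ≤ energy (wordWeight p) fun _ _ : Fin m → ι => c :=
            energy_mono (wordWeight_nonneg hp) fun u v => hJ _ _ (by simpa using h)
        _ = 0 + c := by rw [energy_const, sum_wordWeight hp1, one_pow, one_mul, zero_add]
  calc energy (wordWeight p) J = ∑ i, ∑ j, p i * p j * e i j := energy_wordWeight_succ p J
    _ ≤ ∑ i, ∑ j, p i * p j * ((if i = j then e i i else 0) + c) :=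
      Finset.sum_le_sum fun i _ => Finset.sum_le_sum fun j _ =>
        mul_le_mul_of_nonneg_left (he i j) (mul_nonneg (hp i) (hp j))
    _ = ∑ i, p i ^ 2 * e i i + (∑ i, p i) * (∑ j, p j) * c := by
      rw [Finset.sum_mul_sum, Finset.sum_mul, ← Finset.sum_add_distrib]
      refine Finset.sum_congr rfl fun i _ => ?_
      simp only [mul_add, Finset.sum_add_distrib, mul_ite, mul_zero, Finset.sum_ite_eq,
        Finset.mem_univ, if_true, Finset.sum_mul, sq]
    _ = ∑ i, p i ^ 2 * e i i + c := by rw [hp1, one_mul, one_mul]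

end WordWeight

theorem ae_eventually_lt_pow {Ω : Type*} [MeasurableSpace Ω] {P : Measure Ω} [IsFiniteMeasure P]
    {f : ℕ → Ω → ℝ} (hf : ∀ m ω, 0 ≤ f m ω) (hfi : ∀ m, Integrable (f m) P) {M a b : ℝ}
    (hb : 0 ≤ b) (hba : b < a) (hfM : ∀ m, ∫ ω, f m ω ∂P ≤ M * b ^ m) :
    ∀ᵐ ω ∂P, ∀ᶠ m in atTop, f m ω < a ^ m := by
  have ha : 0 < a := hb.trans_lt hba
  have hmarkov (m) : P {ω | a ^ m ≤ f m ω} ≤ ENNReal.ofReal (M * (b / a) ^ m) := by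
    rw [← ofReal_measureReal]
    refine ENNReal.ofReal_le_ofReal ?_
    rw [div_pow, ← mul_div_assoc, le_div_iff₀' (by positivity)]
    exact (mul_meas_ge_le_integral_of_nonneg (.of_forall (hf m)) (hfi m) _).trans (hfM m)
  have hsummable : ∑' m, P {ω | a ^ m ≤ f m ω} ≠ ∞ := by
    refine ne_top_of_le_ne_top ?_ (ENNReal.tsum_le_tsum hmarkov)
    exact ((summable_geometric_of_lt_one (by positivity)
      ((div_lt_one ha).2 hba)).mul_left M).tsum_ofReal_ne_top
  filter_upwards [ae_eventually_notMem hsummable] with ω hω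
  exact hω.mono fun m => not_le.1

section WordPointCorrelation

variable {E : Type*} [NormedAddCommGroup E] [MeasurableSpace E] [BorelSpace E]
  [SecondCountableTopology E] {ι : Type*} {T : ι → E → E} {r p : ι → ℝ} {q σ : ℝ}

theorem measurableSet_dist_wordPoint_le [Finite ι] (hT : ∀ i, Continuous (T i)) (y : E) {m : ℕ}
    (u v : Fin m → ι) (η : ℝ) :
    MeasurableSet {t | dist (wordPoint T y u t) (wordPoint T y v t) ≤ η} :=
  (isClosed_le ((continuous_wordPoint hT y u).dist (continuous_wordPoint hT y v))
    continuous_const).measurableSet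

variable [Fintype ι]

theorem exists_measureReal_dist_wordPoint_le (hr : ∀ i, 0 ≤ r i) (hrq : ∀ i, r i ≤ q)
    (hq : q < 1 / 2) (hT : ∀ i x y, dist (T i x) (T i y) = r i * dist x y) (ν : Measure E)
    [IsFiniteMeasure ν] (hν : ∃ A, ∀ x, ∀ ρ > 0, ν.real (closedBall x ρ) ≤ A * ρ ^ σ) (y : E) :
    ∃ c, 0 ≤ c ∧ ∀ η > 0, ∀ (m : ℕ) (u v : Fin (m + 1) → ι), u 0 ≠ v 0 →
      (Measure.pi fun _ : ι => ν).real {t | dist (wordPoint T y u t) (wordPoint T y v t) ≤ η} ≤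
        c * η ^ σ := by
  classical
  obtain ⟨A, hA⟩ := hν
  have hA0 : 0 ≤ A := by simpa using measureReal_nonneg.trans (hA y 1 one_pos)
  have hgap : 0 < 1 - q / (1 - q) := sub_pos.2 ((div_lt_one (by linarith)).2 (by linarith))
  have hTc (i) : Continuous (T i) :=
    (LipschitzWith.of_dist_le' fun x z => (hT i x z).le).continuous
  refine ⟨A * (2 / (1 - q / (1 - q))) ^ σ * ν.real univ ^ (Fintype.card ι - 1), by positivity,
    fun η hη m u v huv => ?_⟩
  obtain ⟨k, hk⟩ := exists_transversal_coordinate hr hrq (by linarith) (fun i x z => (hT i x z).le)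
    y huv
  have hpre : {t | dist (wordPoint T y u t) (wordPoint T y v t) ≤ η} =
      (wordPoint T y u - wordPoint T y v) ⁻¹' closedBall 0 η := by
    ext t
    rw [mem_preimage, mem_closedBall, dist_zero_right, mem_ofPred_eq, dist_eq_norm, Pi.sub_apply]
  rw [hpre]
  exact measureReal_pi_preimage_closedBall_le ν hA0 hA hgap
    ((continuous_wordPoint hTc y u).sub (continuous_wordPoint hTc y v)).measurable hk 0 hη

theorem exists_energy_wordWeight_le (hr : ∀ i, 0 < r i) (hrq : ∀ i, r i ≤ q) (hq0 : 0 < q)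
    (hq : q < 1 / 2) (hT : ∀ i x y, dist (T i x) (T i y) = r i * dist x y) (ν : Measure E)
    [IsFiniteMeasure ν] (hν : ∃ A, ∀ x, ∀ ρ > 0, ν.real (closedBall x ρ) ≤ A * ρ ^ σ)
    (hσ : 0 ≤ σ) (hp : ∀ i, 0 ≤ p i) (hp1 : ∑ i, p i = 1)
    (hpr : ∑ i, p i ^ 2 * r i ^ (-σ) < 1) (y : E) :
    ∃ M, ∀ m, ∀ η, q ^ m ≤ η →
      energy (wordWeight p) (fun u v : Fin m → ι => (Measure.pi fun _ : ι => ν).real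
        {t | dist (wordPoint T y u t) (wordPoint T y v t) ≤ η}) ≤ M * η ^ σ := by
  obtain ⟨c, hc, hcν⟩ := exists_measureReal_dist_wordPoint_le (fun i => (hr i).le) hrq hq hT ν hν y
  set P := Measure.pi fun _ : ι => ν
  set φ : ℕ → ℝ → ℝ := fun m η => energy (wordWeight p) fun u v : Fin m → ι =>
    P.real {t | dist (wordPoint T y u t) (wordPoint T y v t) ≤ η} with hφ
  have hlarge (m : ℕ) (η : ℝ) (hη : 1 ≤ η) : φ m η ≤ P.real univ * η ^ σ :=
    calc φ m η ≤ energy (wordWeight p) fun _ _ : Fin m → ι => P.real univ :=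
          energy_mono (wordWeight_nonneg hp) fun u v => measureReal_mono (subset_univ _)
      _ = P.real univ := by rw [energy_const, sum_wordWeight hp1, one_pow, one_mul]
      _ ≤ P.real univ * η ^ σ :=
          le_mul_of_one_le_right measureReal_nonneg (Real.one_le_rpow hη hσ)
  have hrec (m : ℕ) (η : ℝ) (hη : 0 < η) :
      φ (m + 1) η ≤ ∑ i, p i ^ 2 * φ m (η / r i) + c * η ^ σ := by
    refine (energy_wordWeight_succ_le hp hp1 (by positivity)
      fun u v huv => hcν η hη m u v huv).trans_eq ?_
    simp only [hφ, dist_wordPoint_cons hT, le_div_iff₀' (hr _)]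
  obtain ⟨M, hM⟩ := exists_rpow_bound_of_scale_recursion hr hrq (fun i => sq_nonneg (p i)) one_pos
    hq0 hpr (fun _ _ _ => mem_univ _) (fun m η _ hη => hlarge m η hη)
    (fun m η hη => hrec m η hη.1)
  exact ⟨M, fun m η hη => hM m η (mem_univ _) (by rwa [one_mul])⟩

theorem ae_eventually_correlationSum_lt_pow (hr : ∀ i, 0 < r i) (hrq : ∀ i, r i ≤ q)
    (hq0 : 0 < q) (hq : q < 1 / 2) (hT : ∀ i x y, dist (T i x) (T i y) = r i * dist x y)
    (ν : Measure E) [IsFiniteMeasure ν]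
    (hν : ∃ A, ∀ x, ∀ ρ > 0, ν.real (closedBall x ρ) ≤ A * ρ ^ σ) (hσ : 0 ≤ σ)
    (hp : ∀ i, 0 ≤ p i) (hp1 : ∑ i, p i = 1) (hpr : ∑ i, p i ^ 2 * r i ^ (-σ) < 1) {τ : ℝ}
    (hτ : τ < σ) (y : E) {K : ℝ} (hK : 1 ≤ K) :
    ∀ᵐ t ∂Measure.pi fun _ : ι => ν, ∀ᶠ m in atTop,
      correlationSum (wordWeight p) (fun u : Fin m → ι => wordPoint T y u t) (K * q ^ m) <
        (q ^ τ) ^ m := by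
  obtain ⟨M, hM⟩ := exists_energy_wordWeight_le hr hrq hq0 hq hT ν hν hσ hp hp1 hpr y
  have hmeas (m : ℕ) (u v : Fin m → ι) :=
    measurableSet_dist_wordPoint_le (fun i => (LipschitzWith.of_dist_le' fun x z =>
      (hT i x z).le).continuous) y u v (K * q ^ m)
  refine ae_eventually_lt_pow (M := M * K ^ σ) (b := q ^ σ)
    (fun m t => correlationSum_nonneg (wordWeight_nonneg hp) _ _)
    (fun m => integrable_correlationSum _ (hmeas m) _) (by positivity)
    (Real.rpow_lt_rpow_of_exponent_gt hq0 (by linarith) hτ) fun m => ?_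
  rw [integral_correlationSum _ (hmeas m)]
  refine (hM m _ (le_mul_of_one_le_left (by positivity) hK)).trans_eq ?_
  rw [Real.mul_rpow (by positivity) (by positivity), Real.rpow_pow_comm hq0.le, mul_assoc]

end WordPointCorrelation

section UbDimLowerBound

variable {E : Type*} [NormedAddCommGroup E] [NormedSpace ℝ E] [FiniteDimensional ℝ E] {ι : Type*}
  [Fintype ι] {T : ι → E → E} {r p : ι → ℝ} {q : ℝ}

theorem le_ubDim_of_frequently_correlationSum_lt_pow
    (hq0 : 0 < q) (hq1 : q < 1) (hT : ∀ i x y, dist (T i x) (T i y) ≤ q * dist x y)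
    (hp : ∀ i, 0 ≤ p i) (hp1 : ∑ i, p i = 1) {F : Set E} (hF : IsBounded F) {t : ι → E}
    (ht : ∀ i, MapsTo (fun x => T i x + t i) F F) {x y : E} (hy : y ∈ F) {K τ : ℝ}
    (hK : 1 + 2 * dist x y ≤ K)
    (h : ∃ᶠ m in atTop, correlationSum (wordWeight p)
      (fun u : Fin m → ι => wordPoint T x u t) (K * q ^ m) < (q ^ τ) ^ m) :
    τ ≤ ubDim F := by
  refine le_ubDim_of_frequently (isBoundedUnder_boxRatio_of_isBounded hF ⟨y, hy⟩) <|
    (tendsto_pow_atTop_nhdsWithin_zero_of_lt_one hq0 hq1).frequently <| h.mono fun m hm => ?_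
  rw [← Real.rpow_pow_comm hq0.le]
  have hscale : q ^ m + 2 * (q ^ m * dist x y) ≤ K * q ^ m :=
    (mul_le_mul_of_nonneg_right hK (by positivity)).trans_eq' (by ring)
  refine (one_le_coverN_mul_correlationSum (wordWeight_nonneg hp) (sum_wordWeight hp1 m)
    (totallyBounded_of_isBounded hF) (by positivity) (wordPoint_mem ht hy)
    (dist_wordPoint_wordPoint_le hq0.le hT x y · t) hscale).trans ?_
  gcongr

variable [MeasurableSpace E] [BorelSpace E]

theorem ae_le_ubDim_of_frostman (hr : ∀ i, 0 < r i)
    (hr2 : ∀ i, r i < 1 / 2) (hT : ∀ i x y, dist (T i x) (T i y) = r i * dist x y)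
    (ν : Measure E) [IsFiniteMeasure ν] {σ s τ : ℝ}
    (hν : ∃ A, ∀ x, ∀ ρ > 0, ν.real (closedBall x ρ) ≤ A * ρ ^ σ) (hσ : 0 ≤ σ)
    (hs : ∑ i, r i ^ s = 1) (hσs : σ < s) (hτ : τ < σ) :
    ∀ᵐ t ∂Measure.pi fun _ : ι => ν, ∀ F : Set E, IsBounded F → F.Nonempty →
      (∀ i, MapsTo (fun x => T i x + t i) F F) → τ ≤ ubDim F := by
  obtain ⟨q, ⟨hq0, hq⟩, hrq⟩ := exists_mem_Ioo_forall_le one_half_pos hr2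
  have hp (i) : 0 ≤ r i ^ s := Real.rpow_nonneg (hr i).le s
  have hpr : ∑ i, (r i ^ s) ^ 2 * r i ^ (-σ) < 1 := by
    have hexp (i) : (r i ^ s) ^ 2 * r i ^ (-σ) = r i ^ (s + (s - σ)) := by
      rw [sq, ← Real.rpow_add (hr i), ← Real.rpow_add (hr i)]
      ring_nf
    simp only [hexp]
    exact sum_rpow_lt_one hr (fun i => (hr2 i).trans one_half_lt_one) hs.le (by linarith)
  have hcorr (n : ℕ) := ae_eventually_correlationSum_lt_pow hr hrq hq0 hq hT ν hν hσ hp hs hpr hτ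
    0 (le_add_of_nonneg_right n.cast_nonneg)
  filter_upwards [ae_all_iff.2 hcorr] with t ht F hF ⟨y, hy⟩ hFt
  obtain ⟨n, hn⟩ := exists_nat_ge (2 * dist 0 y)
  exact le_ubDim_of_frequently_correlationSum_lt_pow hq0 (by linarith)
    (fun i x z => (hT i x z).trans_le (mul_le_mul_of_nonneg_right (hrq i) dist_nonneg)) hp hs hF hFt
    hy (add_le_add_right hn 1) (ht n).frequently

end UbDimLowerBound

theorem ubDim_inhomogeneous_eq {E ι : Type*} [NormedAddCommGroup E] [NormedSpace ℝ E]
    [FiniteDimensional ℝ E] [Fintype ι] {f : ι → E → E} {r : ι → ℝ} {F₀ F C : Set E} {s : ℝ}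
    (hr : ∀ i, 0 < r i) (hr1 : ∀ i, r i < 1)
    (hf : ∀ i x y, dist (f i x) (f i y) ≤ r i * dist x y) (hs : ∑ i, r i ^ s ≤ 1)
    (hF₀ : IsBounded F₀) (hF₀f : F₀ ⊆ ⋃ i, f i '' F₀)
    (hlower : min s (finrank ℝ E) ≤ ubDim F₀) (hF : IsBounded F)
    (hFC : F = (⋃ i, f i '' F) ∪ C) (hCne : C.Nonempty) :
    ubDim F = max (ubDim F₀) (ubDim C) := by
  obtain ⟨q, ⟨hq0, hq1⟩, hrq⟩ := exists_mem_Ioo_forall_le one_pos hr1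
  have hCF : C ⊆ F := hFC ▸ subset_union_right
  have hFf (i) : MapsTo (f i) F F := mapsTo_iff_image_subset.2 <|
    (subset_iUnion_of_subset i subset_rfl).trans (subset_union_left.trans_eq hFC.symm)
  have hF₀F : F₀ ⊆ closure F := subset_closure_of_mapsTo hq0.le hq1
    (fun i x y => (hf i x y).trans (mul_le_mul_of_nonneg_right (hrq i) dist_nonneg)) hF₀ hF₀f hFf
    (hCne.mono hCF)
  have hmono {G : Set E} (hG : G ⊆ closure F) : ubDim G ≤ ubDim F :=
    (ubDim_mono (totallyBounded_of_isBounded hF.closure)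
      (isBoundedUnder_boxRatio_of_isBounded hF.closure (hCne.mono hCF).closure) hG).trans_eq
      (ubDim_closure F)
  refine le_antisymm ?_ (max_le (hmono hF₀F) (hmono (hCF.trans subset_closure)))
  calc ubDim F ≤ min (max s (ubDim C)) (finrank ℝ E) :=
        le_min (ubDim_inhomogeneous_le hr hr1 hf (totallyBounded_of_isBounded hF) hFC hCne
          (isBoundedUnder_boxRatio_of_isBounded (hF.subset hCF) hCne) hs)
          (ubDim_le_finrank hF (hCne.mono hCF))
    _ ≤ max (min s (finrank ℝ E)) (ubDim C) := by
        rw [min_max_distrib_right]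
        exact max_le_max le_rfl (min_le_left _ _)
    _ ≤ max (ubDim F₀) (ubDim C) := max_le_max hlower le_rfl

theorem ae_pi_of_forall_ae_pi_restrict {ι X : Type*} [Fintype ι] [MeasurableSpace X]
    (μ : Measure X) [SigmaFinite μ] {s : ℕ → Set X} (hs : Monotone s) (hsX : ⋃ n, s n = univ)
    {p : (ι → X) → Prop} (h : ∀ n, ∀ᵐ t ∂Measure.pi fun _ => μ.restrict (s n), p t) :
    ∀ᵐ t ∂Measure.pi fun _ => μ, p t := by
  simp only [← Measure.restrict_pi_pi] at h
  have hunion : ⋃ n, univ.pi (fun _ : ι => s n) = univ := by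
    rw [iUnion_univ_pi_of_monotone fun _ => hs, hsX, pi_univ]
  rwa [← ae_restrict_iUnion_iff, hunion, Measure.restrict_univ] at h

section Haar

variable {E : Type*} [NormedAddCommGroup E] [NormedSpace ℝ E] [FiniteDimensional ℝ E]
  [MeasurableSpace E] [BorelSpace E] (μ : Measure E) [μ.IsAddHaarMeasure] {ι : Type*} [Fintype ι]
  {T : ι → E → E} {r : ι → ℝ}

theorem exists_measureReal_restrict_closedBall_le {S : Set E} (hS : μ S ≠ ∞) {σ : ℝ} (hσ : 0 ≤ σ)
    (hσd : σ ≤ finrank ℝ E) :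
    ∃ A, ∀ x, ∀ ρ > 0, (μ.restrict S).real (closedBall x ρ) ≤ A * ρ ^ σ := by
  refine ⟨max (μ.real (ball 0 1)) (μ.real S), fun x ρ hρ => ?_⟩
  rw [measureReal_restrict_apply measurableSet_closedBall]
  rcases le_total ρ 1 with hρ1 | hρ1
  · calc μ.real (closedBall x ρ ∩ S) ≤ μ.real (closedBall x ρ) :=
          measureReal_mono inter_subset_left measure_closedBall_lt_top.ne
      _ = μ.real (ball 0 1) * ρ ^ (finrank ℝ E : ℝ) := by
          rw [μ.addHaar_real_closedBall x hρ.le, Real.rpow_natCast, mul_comm]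
      _ ≤ _ := mul_le_mul (le_max_left _ _) (Real.rpow_le_rpow_of_exponent_ge hρ hρ1 hσd)
          (by positivity) (by positivity)
  · calc μ.real (closedBall x ρ ∩ S) ≤ μ.real S := measureReal_mono inter_subset_right hS
      _ ≤ max (μ.real (ball 0 1)) (μ.real S) := le_max_right _ _
      _ ≤ _ := le_mul_of_one_le_right (by positivity) (Real.one_le_rpow hρ1 hσ)

theorem ae_min_finrank_le_ubDim (hr : ∀ i, 0 < r i) (hr2 : ∀ i, r i < 1 / 2)
    (hT : ∀ i x y, dist (T i x) (T i y) = r i * dist x y) {s : ℝ} (hs : ∑ i, r i ^ s = 1) :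
    ∀ᵐ t ∂Measure.pi fun _ : ι => μ, ∀ F : Set E, IsBounded F → F.Nonempty →
      (∀ i, MapsTo (fun x => T i x + t i) F F) → min s (finrank ℝ E) ≤ ubDim F := by
  rcases le_or_gt (min s (finrank ℝ E)) 0 with hmin | hmin
  · exact .of_forall fun t F hF hFne _ =>
      hmin.trans (ubDim_nonneg (isBoundedUnder_boxRatio_of_isBounded hF hFne))
  obtain ⟨τ, -, hτ, hτlim⟩ := exists_seq_strictMono_tendsto (min s (finrank ℝ E))
  have hae (k : ℕ) : ∀ᵐ t ∂Measure.pi fun _ : ι => μ, ∀ F : Set E, IsBounded F → F.Nonempty →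
      (∀ i, MapsTo (fun x => T i x + t i) F F) → τ k ≤ ubDim F := by
    obtain ⟨σ, hσ, hσmin⟩ := exists_between (max_lt hmin (hτ k))
    rw [max_lt_iff] at hσ
    rw [lt_min_iff] at hσmin
    refine ae_pi_of_forall_ae_pi_restrict μ (s := fun n : ℕ => closedBall 0 n)
      (fun m n hmn => closedBall_subset_closedBall (Nat.cast_le.2 hmn)) (iUnion_closedBall_nat 0)
      fun n => ?_
    have : IsFiniteMeasure (μ.restrict (closedBall 0 n)) :=
      isFiniteMeasure_restrict.2 measure_closedBall_lt_top.ne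
    exact ae_le_ubDim_of_frostman hr hr2 hT _
      (exists_measureReal_restrict_closedBall_le μ measure_closedBall_lt_top.ne hσ.1.le hσmin.2.le)
      hσ.1.le hs hσmin.1 hσ.2
  filter_upwards [ae_all_iff.2 hae] with t ht F hF hFne hFt
  exact le_of_tendsto' hτlim fun k => ht k F hF hFne hFt

theorem upper_box_dim_inhomogeneous_generic_general (hr : ∀ i, 0 < r i) (hr2 : ∀ i, r i < 1 / 2)
    (hT : ∀ i x y, dist (T i x) (T i y) = r i * dist x y) :
    ∀ᵐ t ∂Measure.pi fun _ : ι => μ, ∀ F₀ FC C : Set E,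
      IsBounded F₀ → F₀.Nonempty → F₀ = ⋃ i, (fun x => T i x + t i) '' F₀ →
      IsBounded FC → C.Nonempty → FC = (⋃ i, (fun x => T i x + t i) '' FC) ∪ C →
      ubDim FC = max (ubDim F₀) (ubDim C) := by
  cases isEmpty_or_nonempty ι
  · exact .of_forall fun t F₀ FC C _ hne h0 => absurd h0 (by simpa using hne.ne_empty)
  have hr1 (i) : r i < 1 := (hr2 i).trans one_half_lt_one
  obtain ⟨s, -, hs⟩ := exists_sum_rpow_eq_one hr hr1
  filter_upwards [ae_min_finrank_le_ubDim μ hr hr2 hT hs] with t ht F₀ FC C hF₀ hF₀ne hF₀eq hFC hCne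
    hFCeq
  have hmaps (i) : MapsTo (fun x => T i x + t i) F₀ F₀ :=
    mapsTo_iff_image_subset.2 <| (subset_iUnion_of_subset i subset_rfl).trans_eq hF₀eq.symm
  exact ubDim_inhomogeneous_eq hr hr1 (fun i x y => by rw [dist_add_right, hT]) hs.le hF₀
    hF₀eq.subset (ht F₀ hF₀ hF₀ne hmaps) hFC hFCeq hCne

end Haar

theorem upper_box_dim_inhomogeneous_generic
    (d N : ℕ) (hd : 0 < d) (hN : 0 < N)
    (T : Fin N → EuclideanSpace ℝ (Fin d) →ₗ[ℝ] EuclideanSpace ℝ (Fin d))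
    (r : Fin N → ℝ) (hr : ∀ i, 0 < r i) (hr2 : ∀ i, r i < 1 / 2)
    (hT : ∀ i x y, dist (T i x) (T i y) = r i * dist x y)
    (C : Set (EuclideanSpace ℝ (Fin d))) (hC : IsCompact C) (hCne : C.Nonempty) :
    ∀ᵐ t : Fin N → EuclideanSpace ℝ (Fin d) ∂volume,
      ∀ F0 FC : Set (EuclideanSpace ℝ (Fin d)),
        IsCompact F0 → F0.Nonempty → F0 = ⋃ i, (fun x => T i x + t i) '' F0 →
        IsCompact FC → FC.Nonempty → FC = (⋃ i, (fun x => T i x + t i) '' FC) ∪ C →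
        ubDim FC = max (ubDim F0) (ubDim C) := by
  filter_upwards [upper_box_dim_inhomogeneous_generic_general volume hr hr2 hT]
    with t ht F0 FC hF0 hF0ne hF0eq hFC _ hFCeq
  exact ht F0 FC C hF0.isBounded hF0ne hF0eq hFC.isBounded hCne hFCeq
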